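/- Let n ≥ 1, s > 0, q ∈ [1,∞], and p, p₁ ∈ [1,∞) with p < p₁ ≤ 2p and s > n(2/p₁ − 1/p). Then there is a constant C > 0 such that for all Schwartz functions f, g on ℝⁿ, ‖fg‖_{B^s_{p,q}} ≤ C ‖f‖_{B^s_{p₁,q}} ‖g‖_{B^s_{p₁,q}}. -/

import Mathlib

open MeasureTheory Real Filter
open scoped ENNReal FourierTransform

noncomputable section

/-- `ℝⁿ` as a Euclidean space. -/
abbrev Rn (n : ℕ) : Type := EuclideanSpace ℝ (Fin n)

variable {n : ℕ}

/-- The Fourier transform of a real-valued Schwartz function, viewed as a ℂ-valued function. -/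
def ftC (f : SchwartzMap (Rn n) ℝ) : Rn n → ℂ :=
  𝓕 (fun x => (f x : ℂ))

/-- `ψ₀` is a Littlewood–Paley function: an even, radial Schwartz function whose Fourier
transform is nonnegative, supported in the annulus `{ξ : 1/2 < ‖ξ‖ < 2}`, and satisfies
`∑_{j ∈ ℤ} ψ̂₀(2^{-j} ξ) = 1` for `ξ ≠ 0`. -/
structure IsLPF (n : ℕ) (ψ₀ : SchwartzMap (Rn n) ℝ) : Prop where
  even : ∀ x : Rn n, ψ₀ (-x) = ψ₀ x
  radial : ∀ x y : Rn n, ‖x‖ = ‖y‖ → ψ₀ x = ψ₀ y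
  ft_im : ∀ ξ : Rn n, (ftC ψ₀ ξ).im = 0
  ft_nonneg : ∀ ξ : Rn n, 0 ≤ (ftC ψ₀ ξ).re
  ft_supp : ∀ ξ : Rn n, ftC ψ₀ ξ ≠ 0 → 1/2 < ‖ξ‖ ∧ ‖ξ‖ < 2
  ft_sum : ∀ ξ : Rn n, ξ ≠ 0 → HasSum (fun j : ℤ => ftC ψ₀ ((2:ℝ) ^ (-j) • ξ)) 1

/-- The Littlewood–Paley kernel `ψ_j(x) = 2^{jn} ψ₀(2^j x)`, whose Fourier transform is
`ψ̂₀(2^{-j} ξ)`. -/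
def lpKernel (ψ₀ : SchwartzMap (Rn n) ℝ) (j : ℤ) (x : Rn n) : ℝ :=
  (2:ℝ) ^ (j * (n:ℤ)) * ψ₀ ((2:ℝ) ^ j • x)

/-- The Littlewood–Paley projection `Δ_j f = ψ_j ∗ f`. -/
def lpProj (ψ₀ : SchwartzMap (Rn n) ℝ) (j : ℤ) (f : Rn n → ℝ) : Rn n → ℝ :=
  MeasureTheory.convolution (lpKernel ψ₀ j) f (ContinuousLinearMap.mul ℝ ℝ) volume

/-- `S_j f = ∑_{m ≤ j} Δ_m f`, the low-frequency cutoff; this is the L² function whose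
Fourier transform is `(∑_{m ≤ j} ψ̂₀(2^{-m} ξ)) f̂(ξ)`. -/
def lowProj (ψ₀ : SchwartzMap (Rn n) ℝ) (j : ℤ) (f : Rn n → ℝ) (x : Rn n) : ℝ :=
  ∑' m : ℤ, if m ≤ j then lpProj ψ₀ m f x else 0

/-- `Ψ` is the low-frequency piece of the Littlewood–Paley decomposition:
`Ψ̂ = 1 − ∑_{k ≥ 0} ψ̂_k`. -/
def IsLowPiece (ψ₀ Ψ : SchwartzMap (Rn n) ℝ) : Prop :=
  ∀ ξ : Rn n, ftC Ψ ξ = 1 - ∑' k : ℕ, ftC ψ₀ ((2:ℝ) ^ (-(k:ℤ)) • ξ)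

/-- The inhomogeneous Besov norm `‖f‖_{B^s_{p,q}}`, valued in `[0,∞]`:
`‖Ψ∗f‖_{L^p} + (∑_{j ≥ 0} (2^{js} ‖Δ_j f‖_{L^p})^q)^{1/q}`, with the supremum over `j`
replacing the `ℓ^q` sum when `q = ∞`. -/
def besovNorm (ψ₀ Ψ : SchwartzMap (Rn n) ℝ) (s : ℝ) (p q : ℝ≥0∞) (f : Rn n → ℝ) : ℝ≥0∞ :=
  eLpNorm (MeasureTheory.convolution (fun x => Ψ x) f (ContinuousLinearMap.mul ℝ ℝ) volume)
      p volume +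
    (if q = ∞ then
      ⨆ j : ℕ, ENNReal.ofReal ((2:ℝ) ^ ((j:ℝ) * s)) * eLpNorm (lpProj ψ₀ (j:ℤ) f) p volume
    else
      (∑' j : ℕ, (ENNReal.ofReal ((2:ℝ) ^ ((j:ℝ) * s)) *
        eLpNorm (lpProj ψ₀ (j:ℤ) f) p volume) ^ q.toReal) ^ (1 / q.toReal))

/-- The heat semigroup `e^{tΔ} f = h_t ∗ f` with `h_t(x) = (4πt)^{-n/2} e^{-‖x‖²/(4t)}`. -/
def heatOp (n : ℕ) (t : ℝ) (f : Rn n → ℝ) : Rn n → ℝ :=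
  MeasureTheory.convolution
    (fun x : Rn n => (4 * π * t) ^ (-(n:ℝ)/2) * Real.exp (-‖x‖^2 / (4*t))) f
    (ContinuousLinearMap.mul ℝ ℝ) volume

/-- The partial derivative `∂_{x_i} f`. -/
def pderiv' (i : Fin n) (f : Rn n → ℝ) (x : Rn n) : ℝ :=
  fderiv ℝ f x (EuclideanSpace.single i 1)

/-- The Laplacian `Δf = ∑ᵢ ∂²_{x_i} f`. -/
def lapl (f : Rn n → ℝ) (x : Rn n) : ℝ :=
  ∑ i : Fin n, pderiv' i (pderiv' i f) x

/-! ### Fourier side -/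

def toC (f : SchwartzMap (Rn n) ℝ) : SchwartzMap (Rn n) ℂ :=
  f.postcompCLM Complex.ofRealCLM

lemma toC_apply (f : SchwartzMap (Rn n) ℝ) (x : Rn n) : toC f x = (f x : ℂ) := rfl

lemma ftC_eq (f : SchwartzMap (Rn n) ℝ) : ftC f = ⇑(𝓕 (toC f) : SchwartzMap (Rn n) ℂ) := rfl

lemma ftC_inj {f g : SchwartzMap (Rn n) ℝ} (h : ∀ ξ, ftC f ξ = ftC g ξ) : f = g := by
  have h1 : 𝓕 (toC f) = 𝓕 (toC g) := by
    ext ξ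
    exact h ξ
  have h2 : toC f = toC g := by
    have := congrArg (fun u => 𝓕⁻ u) h1
    simpa using this
  ext x
  have := congrArg (fun u : SchwartzMap (Rn n) ℂ => u x) h2
  simpa [toC_apply] using this

/-- dilation as continuous linear equivalence -/
def dilEquiv (n : ℕ) (j : ℤ) : Rn n ≃L[ℝ] Rn n :=
  ContinuousLinearEquiv.smulLeft (Units.mk0 ((2:ℝ) ^ j) (by positivity))

/-- dilated kernel as a Schwartz function -/
def dil (K : SchwartzMap (Rn n) ℝ) (j : ℤ) : SchwartzMap (Rn n) ℝ :=
  ((2:ℝ) ^ (j * (n:ℤ))) • SchwartzMap.compCLMOfContinuousLinearEquiv ℝ (dilEquiv n j) K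

lemma dil_apply (K : SchwartzMap (Rn n) ℝ) (j : ℤ) (x : Rn n) : dil K j x = lpKernel K j x := rfl

lemma dil_coe (K : SchwartzMap (Rn n) ℝ) (j : ℤ) : (⇑(dil K j)) = lpKernel K j := rfl

lemma ftC_dil (K : SchwartzMap (Rn n) ℝ) (j : ℤ) (ξ : Rn n) :
    ftC (dil K j) ξ = ftC K ((2:ℝ) ^ (-j) • ξ) := by
  unfold ftC
  rw [Real.fourier_eq, Real.fourier_eq]
  have := MeasureTheory.Measure.integral_comp_smul (volume : Measure (Rn n))
    (fun v : Rn n => 𝐞 (-inner ℝ v ((2:ℝ) ^ (-j) • ξ)) • ((K v : ℝ) : ℂ)) ((2:ℝ)^j)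
  have h2 : (2:ℝ) ^ (j * (n:ℤ)) * |(((2:ℝ)^j) ^ (Module.finrank ℝ (Rn n)))⁻¹| = 1 := by
    rw [finrank_euclideanSpace_fin, abs_of_pos (by positivity), zpow_mul, zpow_natCast]
    exact mul_inv_cancel₀ (by positivity)
  have h3 : (∫ v : Rn n, 𝐞 (-inner ℝ v ((2:ℝ) ^ (-j) • ξ)) • ((K v : ℝ) : ℂ)) =
      (2:ℝ) ^ (j * (n:ℤ)) • ∫ v : Rn n, 𝐞 (-inner ℝ ((2:ℝ)^j • v) ((2:ℝ) ^ (-j) • ξ)) •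
        ((K ((2:ℝ)^j • v) : ℝ) : ℂ) := by
    rw [this, smul_smul, h2, one_smul]
  rw [h3, ← integral_smul]
  congr 1
  ext v
  have h4 : inner ℝ ((2:ℝ)^j • v) ((2:ℝ) ^ (-j) • ξ) = inner ℝ v ξ := by
    rw [real_inner_smul_left, real_inner_smul_right, ← mul_assoc, ← zpow_add₀ (by norm_num)]
    simp
  rw [h4, dil_apply, lpKernel]
  simp only [Complex.ofReal_mul, Circle.smul_def, smul_eq_mul, Complex.real_smul]
  ring

/-- convolution as Schwartz function -/
def cv (f g : SchwartzMap (Rn n) ℝ) : SchwartzMap (Rn n) ℝ :=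
  (SchwartzMap.convolution (ContinuousLinearMap.mul ℂ ℂ) (toC f) (toC g)).postcompCLM
    Complex.reCLM

lemma cv_ofReal (f g : SchwartzMap (Rn n) ℝ) (x : Rn n) :
    SchwartzMap.convolution (ContinuousLinearMap.mul ℂ ℂ) (toC f) (toC g) x =
      ((MeasureTheory.convolution f g (ContinuousLinearMap.mul ℝ ℝ) volume x : ℝ) : ℂ) := by
  rw [SchwartzMap.convolution_apply, MeasureTheory.convolution, MeasureTheory.convolution,
    ← integral_complex_ofReal]
  simp [toC_apply]

lemma cv_apply (f g : SchwartzMap (Rn n) ℝ) (x : Rn n) :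
    cv f g x = MeasureTheory.convolution f g (ContinuousLinearMap.mul ℝ ℝ) volume x := by
  unfold cv
  rw [SchwartzMap.postcompCLM_apply, cv_ofReal]
  simp

lemma cv_coe (f g : SchwartzMap (Rn n) ℝ) :
    (⇑(cv f g)) = MeasureTheory.convolution f g (ContinuousLinearMap.mul ℝ ℝ) volume :=
  funext (cv_apply f g)

lemma toC_cv (f g : SchwartzMap (Rn n) ℝ) :
    toC (cv f g) = SchwartzMap.convolution (ContinuousLinearMap.mul ℂ ℂ) (toC f) (toC g) := by
  ext x
  rw [toC_apply, cv_apply, cv_ofReal]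

lemma ftC_cv (f g : SchwartzMap (Rn n) ℝ) (ξ : Rn n) :
    ftC (cv f g) ξ = ftC f ξ * ftC g ξ := by
  rw [ftC_eq, toC_cv, SchwartzMap.fourier_convolution]
  rfl

/-- pointwise product -/
def ml (f g : SchwartzMap (Rn n) ℝ) : SchwartzMap (Rn n) ℝ :=
  SchwartzMap.pairing (ContinuousLinearMap.mul ℝ ℝ) f g

lemma ml_apply (f g : SchwartzMap (Rn n) ℝ) (x : Rn n) : ml f g x = f x * g x := rfl

lemma ftC_ml (f g : SchwartzMap (Rn n) ℝ) (ξ : Rn n) :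
    ftC (ml f g) ξ = MeasureTheory.convolution (ftC f) (ftC g)
      (ContinuousLinearMap.mul ℂ ℂ) volume ξ := by
  rw [ftC_eq f, ftC_eq g, ← SchwartzMap.convolution_apply]
  have : SchwartzMap.convolution (ContinuousLinearMap.mul ℂ ℂ) (𝓕 (toC f)) (𝓕 (toC g)) =
    𝓕⁻ (𝓕 (SchwartzMap.convolution (ContinuousLinearMap.mul ℂ ℂ) (𝓕 (toC f)) (𝓕 (toC g)))) := by
    simp
  rw [this, SchwartzMap.fourier_convolution, SchwartzMap.fourierInv_coe,
    Real.fourierInv_eq_fourier_comp_neg, ftC]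
  have key : ∀ (h : SchwartzMap (Rn n) ℂ) (x : Rn n), 𝓕 (𝓕 h) (-x) = h x := by
    intro h x
    have h1 : 𝓕⁻ (𝓕 h) x = h x := by simp
    rw [← h1, SchwartzMap.fourierInv_coe, Real.fourierInv_eq_fourier_neg]
    rfl
  refine congrFun (congrArg _ (funext fun x => ?_)) ξ
  rw [SchwartzMap.pairing_apply_apply, key, key]
  simp [toC_apply, ml_apply]

/-- Fourier support in a ball -/
def FS (f : SchwartzMap (Rn n) ℝ) (R : ℝ) : Prop := ∀ ξ, R ≤ ‖ξ‖ → ftC f ξ = 0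

lemma FS.ml {f g : SchwartzMap (Rn n) ℝ} {a b : ℝ} (hf : FS f a) (hg : FS g b) :
    FS (ml f g) (a + b) := by
  intro ξ hξ
  rw [ftC_ml, MeasureTheory.convolution]
  rw [integral_eq_zero_of_ae]
  refine Eventually.of_forall fun t => ?_
  simp only [ContinuousLinearMap.mul_apply', Pi.zero_apply]
  rcases le_or_gt a ‖t‖ with h | h
  · rw [hf t h, zero_mul]
  · rw [hg (ξ - t), mul_zero]
    have := norm_sub_norm_le ξ t
    linarith

lemma FS.cv {f : SchwartzMap (Rn n) ℝ} {a : ℝ} (hf : FS f a) (g : SchwartzMap (Rn n) ℝ) :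
    FS (cv f g) a := by
  intro ξ hξ
  rw [ftC_cv, hf ξ hξ, zero_mul]

lemma FS.dil {f : SchwartzMap (Rn n) ℝ} {a : ℝ} (hf : FS f a) (j : ℤ) :
    FS (dil f j) ((2:ℝ)^j * a) := by
  intro ξ hξ
  rw [ftC_dil]
  apply hf
  rw [norm_smul, Real.norm_of_nonneg (by positivity), zpow_neg, ← div_eq_inv_mul,
    le_div_iff₀' (by positivity)]
  exact hξ

lemma FS.mono {f : SchwartzMap (Rn n) ℝ} {a b : ℝ} (hf : FS f a) (h : a ≤ b) : FS f b :=
  fun ξ hξ => hf ξ (h.trans hξ)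

section LP
variable {ψ₀ Ψ : SchwartzMap (Rn n) ℝ}

lemma ftC_psi_zero (hψ : IsLPF n ψ₀) {ξ : Rn n} (h : ‖ξ‖ ≤ 1/2 ∨ 2 ≤ ‖ξ‖) : ftC ψ₀ ξ = 0 := by
  by_contra h0
  have := hψ.ft_supp ξ h0
  rcases h with h | h <;> linarith [this.1, this.2]

lemma FS_psi (hψ : IsLPF n ψ₀) : FS ψ₀ 2 := fun _ hξ => ftC_psi_zero hψ (Or.inr hξ)

lemma norm_two_smul (j : ℤ) (ξ : Rn n) : ‖(2:ℝ)^j • ξ‖ = (2:ℝ)^j * ‖ξ‖ := by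
  rw [norm_smul, Real.norm_of_nonneg (by positivity)]

lemma ftC_Psi_one (hψ : IsLPF n ψ₀) (hΨ : IsLowPiece ψ₀ Ψ) {ξ : Rn n} (h : ‖ξ‖ ≤ 1/2) :
    ftC Ψ ξ = 1 := by
  rw [hΨ ξ]
  have : ∀ k : ℕ, ftC ψ₀ ((2:ℝ) ^ (-(k:ℤ)) • ξ) = 0 := by
    intro k
    apply ftC_psi_zero hψ
    left
    rw [norm_two_smul]
    have : (2:ℝ) ^ (-(k:ℤ)) ≤ 1 := zpow_le_one_of_nonpos₀ (by norm_num) (by simp)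
    nlinarith [norm_nonneg ξ]
  simp only [this, tsum_zero, sub_zero]

lemma FS_Psi (hψ : IsLPF n ψ₀) (hΨ : IsLowPiece ψ₀ Ψ) : FS Ψ 1 := by
  intro ξ hξ
  rw [hΨ ξ]
  have hne : ξ ≠ 0 := by
    rintro rfl
    simp at hξ
    linarith
  have h1 := hψ.ft_sum ξ hne
  have h2 : HasSum (fun k : ℕ => ftC ψ₀ ((2:ℝ) ^ (-(k:ℤ)) • ξ)) 1 := by
    have hinj : Function.Injective (fun k : ℕ => (k:ℤ)) := Nat.cast_injective
    refine (hinj.hasSum_iff ?_).2 h1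
    intro j hj
    apply ftC_psi_zero hψ
    right
    rw [norm_two_smul]
    have hj' : 1 ≤ -j := by
      by_contra h
      exact hj ⟨j.toNat, by simp; omega⟩
    have : (2:ℝ)^(1:ℤ) ≤ (2:ℝ)^(-j) := zpow_le_zpow_right₀ (by norm_num) hj'
    simp only [zpow_one] at this
    nlinarith
  rw [h2.tsum_eq, sub_self]

lemma summable_psi (hψ : IsLPF n ψ₀) (ξ : Rn n) :
    Summable (fun k : ℕ => ftC ψ₀ ((2:ℝ) ^ (-(k:ℤ)) • ξ)) := by
  by_cases h : ξ = 0
  · subst h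
    have : ftC ψ₀ 0 = 0 := ftC_psi_zero hψ (by simp)
    simp [this, summable_zero]
  · have := (hψ.ft_sum ξ h).summable
    exact this.comp_injective (Nat.cast_injective (R := ℤ))

lemma Psi_succ (hψ : IsLPF n ψ₀) (hΨ : IsLowPiece ψ₀ Ψ) (j : ℤ) :
    dil Ψ (j+1) = dil Ψ j + dil ψ₀ j := by
  apply ftC_inj
  intro ξ
  have hadd : ftC (dil Ψ j + dil ψ₀ j) ξ = ftC (dil Ψ j) ξ + ftC (dil ψ₀ j) ξ := by
    have : toC (dil Ψ j + dil ψ₀ j) = toC (dil Ψ j) + toC (dil ψ₀ j) := by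
      ext x; simp [toC_apply]
    rw [ftC_eq, this, FourierTransform.fourier_add]
    rfl
  rw [hadd, ftC_dil, ftC_dil, ftC_dil, hΨ, hΨ,
    (summable_psi hψ ((2:ℝ)^(-j) • ξ)).tsum_eq_zero_add]
  have : ∀ k : ℕ, (2:ℝ) ^ (-(k:ℤ)) • (2:ℝ) ^ (-(j+1)) • ξ =
    (2:ℝ) ^ (-((k+1 : ℕ):ℤ)) • (2:ℝ) ^ (-j) • ξ := by
    intro k
    rw [smul_smul, smul_smul, ← zpow_add₀ (by norm_num), ← zpow_add₀ (by norm_num)]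
    congr 2
    push_cast
    ring
  simp only [this]
  simp only [Nat.cast_zero, neg_zero, zpow_zero, one_smul]
  ring

lemma integral_Psi (hψ : IsLPF n ψ₀) (hΨ : IsLowPiece ψ₀ Ψ) : ∫ x, Ψ x = 1 := by
  have h := ftC_Psi_one hψ hΨ (ξ := 0) (by simp)
  rw [ftC, Real.fourier_eq] at h
  simp only [inner_zero_right, neg_zero, AddChar.map_zero_eq_one, one_smul] at h
  rw [integral_complex_ofReal] at h
  exact_mod_cast h

lemma repro (hψ : IsLPF n ψ₀) (hΨ : IsLowPiece ψ₀ Ψ) {h : SchwartzMap (Rn n) ℝ} (j : ℤ)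
    (hh : FS h ((2:ℝ)^(j+1))) : cv (dil Ψ (j+2)) h = h := by
  apply ftC_inj
  intro ξ
  rw [ftC_cv]
  rcases le_or_gt ((2:ℝ)^(j+1)) ‖ξ‖ with h1 | h1
  · rw [hh ξ h1, mul_zero]
  · rw [ftC_dil, ftC_Psi_one hψ hΨ, one_mul]
    rw [norm_two_smul]
    have : (2:ℝ) ^ (-(j+2)) * (2:ℝ)^(j+1) = 1/2 := by
      rw [← zpow_add₀ (by norm_num)]
      have : -(j+2) + (j+1) = -1 := by ring
      rw [this]; norm_num
    rw [← this]
    gcongr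

lemma proj_zero (hψ : IsLPF n ψ₀) {h : SchwartzMap (Rn n) ℝ} (k : ℤ)
    (hh : FS h ((2:ℝ)^(k-1))) : cv (dil ψ₀ k) h = 0 := by
  apply ftC_inj
  intro ξ
  have h0 : ftC (0 : SchwartzMap (Rn n) ℝ) ξ = 0 := by
    simp [ftC, Real.fourier_eq]
  rw [ftC_cv, h0]
  rcases le_or_gt ((2:ℝ)^(k-1)) ‖ξ‖ with h1 | h1
  · rw [hh ξ h1, mul_zero]
  · rw [ftC_dil, ftC_psi_zero hψ, zero_mul]
    left
    rw [norm_two_smul]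
    have : (2:ℝ) ^ (-k) * (2:ℝ)^(k-1) = 1/2 := by
      rw [← zpow_add₀ (by norm_num)]
      have : -k + (k-1) = -1 := by ring
      rw [this]; norm_num
    rw [← this]
    gcongr
end LP

/-! ### Schur test -/

lemma schur_aux {β : Type*} [MeasurableSpace β] (ν : Measure β)
    {k b : β → ℝ≥0∞} (hk : Measurable k) (hb : Measurable b) {q : ℝ} (hq : 1 ≤ q) :
    (∫⁻ y, k y * b y ∂ν) ^ q ≤ (∫⁻ y, k y ∂ν) ^ (q - 1) * ∫⁻ y, k y * b y ^ q ∂ν := by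
  rcases eq_or_lt_of_le hq with h1 | h1
  · subst h1; simp
  have hq0 : 0 < q := by linarith
  have hc := Real.HolderConjugate.conjExponent h1
  set q' := q.conjExponent with hq'
  have hq'0 : 0 < q' := hc.symm.pos
  have hsum : 1/q' + 1/q = 1 := by
    have := hc.inv_add_inv_eq_one
    rw [one_div, one_div]; linarith
  have H := ENNReal.lintegral_mul_le_Lp_mul_Lq ν hc.symm (f := fun y => k y ^ (1/q'))
    (g := fun y => k y ^ (1/q) * b y) (hk.pow_const _).aemeasurable
    ((hk.pow_const _).mul hb).aemeasurable
  have e1 : ∀ y, ((fun y => k y ^ (1/q')) * (fun y => k y ^ (1/q) * b y)) y = k y * b y := by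
    intro y
    simp only [Pi.mul_apply]
    rw [← mul_assoc, ← ENNReal.rpow_add_of_nonneg _ _ (by positivity) (by positivity), hsum,
      ENNReal.rpow_one]
  have e2 : ∀ y, (k y ^ (1/q')) ^ q' = k y := by
    intro y
    rw [← ENNReal.rpow_mul, one_div_mul_cancel hq'0.ne', ENNReal.rpow_one]
  have e3 : ∀ y, (k y ^ (1/q) * b y) ^ q = k y * b y ^ q := by
    intro y
    rw [ENNReal.mul_rpow_of_nonneg _ _ hq0.le, ← ENNReal.rpow_mul, one_div_mul_cancel hq0.ne',
      ENNReal.rpow_one]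
  simp only [e1, e2, e3] at H
  calc _ ≤ ((∫⁻ y, k y ∂ν) ^ (1/q') * (∫⁻ y, k y * b y ^ q ∂ν) ^ (1/q)) ^ q := by gcongr
    _ = _ := by
      rw [ENNReal.mul_rpow_of_nonneg _ _ hq0.le, ← ENNReal.rpow_mul, ← ENNReal.rpow_mul,
        one_div_mul_cancel hq0.ne', ENNReal.rpow_one]
      congr 2
      have : 1/q' = 1 - 1/q := by linarith
      rw [this, sub_mul, one_div_mul_cancel hq0.ne', one_mul]

lemma schur {α β : Type*} [MeasurableSpace α] [MeasurableSpace β] (μ : Measure α) (ν : Measure β)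
    [SFinite μ] [SFinite ν] {k : α → β → ℝ≥0∞} (hk : Measurable (Function.uncurry k))
    {b : β → ℝ≥0∞} (hb : Measurable b) {A : ℝ≥0∞}
    (h1 : ∀ x, ∫⁻ y, k x y ∂ν ≤ A) (h2 : ∀ y, ∫⁻ x, k x y ∂μ ≤ A) {q : ℝ} (hq : 1 ≤ q) :
    (∫⁻ x, (∫⁻ y, k x y * b y ∂ν) ^ q ∂μ) ^ (1/q) ≤ A * (∫⁻ y, b y ^ q ∂ν) ^ (1/q) := by
  have hq0 : 0 < q := by linarith
  have hm : Measurable (Function.uncurry fun x y => k x y * b y ^ q) :=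
    hk.mul ((hb.comp measurable_snd).pow_const q)
  have key : ∫⁻ x, (∫⁻ y, k x y * b y ∂ν) ^ q ∂μ ≤ A ^ q * ∫⁻ y, b y ^ q ∂ν := by
    calc _ ≤ ∫⁻ x, A ^ (q-1) * ∫⁻ y, k x y * b y ^ q ∂ν ∂μ := by
          apply lintegral_mono
          intro x
          refine (schur_aux ν hk.of_uncurry_left hb hq).trans ?_
          have : 0 ≤ q - 1 := by linarith
          exact mul_le_mul' (ENNReal.rpow_le_rpow (h1 x) this) le_rfl
      _ = A ^ (q-1) * ∫⁻ x, ∫⁻ y, k x y * b y ^ q ∂ν ∂μ := by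
          rw [lintegral_const_mul _ hm.lintegral_prod_right]
      _ = A ^ (q-1) * ∫⁻ y, ∫⁻ x, k x y * b y ^ q ∂μ ∂ν := by
          rw [lintegral_lintegral_swap hm.aemeasurable]
      _ ≤ A ^ (q-1) * ∫⁻ y, A * b y ^ q ∂ν := by
          gcongr with y
          rw [lintegral_mul_const _ hk.of_uncurry_right]
          gcongr
          exact h2 y
      _ = _ := by
          rw [lintegral_const_mul _ (hb.pow_const _), ← mul_assoc]
          congr 1
          nth_rw 2 [← ENNReal.rpow_one A]
          rw [← ENNReal.rpow_add_of_nonneg _ _ (by linarith) (by norm_num)]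
          congr 1; ring
  calc _ ≤ (A ^ q * ∫⁻ y, b y ^ q ∂ν) ^ (1/q) := by gcongr
    _ = _ := by
      rw [ENNReal.mul_rpow_of_nonneg _ _ (by positivity), ← ENNReal.rpow_mul,
        mul_one_div_cancel hq0.ne', ENNReal.rpow_one]

/-! ### Sequence spaces -/

def lq (q : ℝ≥0∞) (b : ℕ → ℝ≥0∞) : ℝ≥0∞ :=
  if q = ∞ then ⨆ j, b j else (∑' j, b j ^ q.toReal) ^ (1 / q.toReal)

lemma one_le_toReal {q : ℝ≥0∞} (hq : 1 ≤ q) (h : q ≠ ∞) : 1 ≤ q.toReal := by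
  rw [← ENNReal.toReal_one]
  exact ENNReal.toReal_mono h hq

lemma lq_mono {q : ℝ≥0∞} {a b : ℕ → ℝ≥0∞} (h : ∀ j, a j ≤ b j) : lq q a ≤ lq q b := by
  unfold lq
  split_ifs
  · exact iSup_mono h
  · have : 0 ≤ q.toReal := ENNReal.toReal_nonneg
    gcongr with j
    exact h j

lemma le_lq {q : ℝ≥0∞} (hq : 1 ≤ q) (b : ℕ → ℝ≥0∞) (j : ℕ) : b j ≤ lq q b := by
  unfold lq
  split_ifs with h
  · exact le_iSup b j
  · have h0 : 0 < q.toReal := by linarith [one_le_toReal hq h]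
    calc b j = (b j ^ q.toReal) ^ (1/q.toReal) := by
          rw [← ENNReal.rpow_mul, mul_one_div_cancel h0.ne', ENNReal.rpow_one]
      _ ≤ _ := by
          gcongr
          exact ENNReal.le_tsum j

lemma lq_add {q : ℝ≥0∞} (hq : 1 ≤ q) (a b : ℕ → ℝ≥0∞) :
    lq q (fun j => a j + b j) ≤ lq q a + lq q b := by
  unfold lq
  split_ifs with h
  · exact iSup_le fun j => add_le_add (le_iSup a j) (le_iSup b j)
  · have := ENNReal.lintegral_Lp_add_le (μ := Measure.count) (f := a) (g := b)
      (Measurable.of_discrete).aemeasurable (Measurable.of_discrete).aemeasurable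
      (one_le_toReal hq h)
    simpa [lintegral_count] using this

lemma lq_const_mul {q : ℝ≥0∞} (hq : 1 ≤ q) (c : ℝ≥0∞) (b : ℕ → ℝ≥0∞) :
    lq q (fun j => c * b j) = c * lq q b := by
  unfold lq
  split_ifs with h
  · rw [ENNReal.mul_iSup]
  · have h0 : 0 < q.toReal := by linarith [one_le_toReal hq h]
    simp_rw [ENNReal.mul_rpow_of_nonneg _ _ h0.le]
    rw [ENNReal.tsum_mul_left, ENNReal.mul_rpow_of_nonneg _ _ (by positivity),
      ← ENNReal.rpow_mul, mul_one_div_cancel h0.ne', ENNReal.rpow_one]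

lemma lq_single {q : ℝ≥0∞} (hq : 1 ≤ q) (c : ℝ≥0∞) :
    lq q (fun j => if j = 0 then c else 0) = c := by
  unfold lq
  split_ifs with h
  · apply le_antisymm
    · exact iSup_le fun j => by dsimp only; split_ifs <;> simp
    · exact le_iSup_of_le 0 (by simp)
  · have h0 : 0 < q.toReal := by linarith [one_le_toReal hq h]
    rw [tsum_eq_single 0]
    · simp only [if_true]
      rw [← ENNReal.rpow_mul, mul_one_div_cancel h0.ne', ENNReal.rpow_one]
    · intro j hj
      simp [hj, h0]

lemma lq_schur {q : ℝ≥0∞} (hq : 1 ≤ q) (w : ℕ → ℕ → ℝ≥0∞) (b : ℕ → ℝ≥0∞) {A : ℝ≥0∞}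
    (h1 : ∀ k, ∑' j, w k j ≤ A) (h2 : ∀ j, ∑' k, w k j ≤ A) :
    lq q (fun k => ∑' j, w k j * b j) ≤ A * lq q b := by
  unfold lq
  split_ifs with h
  · apply iSup_le
    intro k
    calc _ ≤ ∑' j, w k j * ⨆ i, b i := by
          apply ENNReal.tsum_le_tsum
          intro j
          gcongr
          exact le_iSup b j
      _ = (∑' j, w k j) * ⨆ i, b i := ENNReal.tsum_mul_right
      _ ≤ _ := by gcongr; exact h1 k
  · have := schur (μ := (Measure.count : Measure ℕ)) (ν := (Measure.count : Measure ℕ))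
      (k := w) (b := b) (A := A) (Measurable.of_discrete)
      (Measurable.of_discrete) (by simpa [lintegral_count] using h1)
      (by simpa [lintegral_count] using h2) (one_le_toReal hq h)
    simpa [lintegral_count] using this

/-- geometric weights -/
def gw (θ : ℝ≥0∞) (z : ℤ) : ℝ≥0∞ := if 0 ≤ z then θ ^ z.toNat else 0

lemma gw_sum (θ : ℝ≥0∞) : ∑' z : ℤ, gw θ z = (1 - θ)⁻¹ := by
  rw [← ENNReal.tsum_geometric]
  have hinj : Function.Injective (fun k : ℕ => (k:ℤ)) := Nat.cast_injective
  rw [← hinj.tsum_eq (f := gw θ)]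
  · simp [gw]
  · intro z hz
    have : 0 ≤ z := by
      by_contra h
      simp [gw, h] at hz
    exact ⟨z.toNat, by simp [this]⟩

lemma gw_row (θ : ℝ≥0∞) (k : ℕ) : ∑' j : ℕ, gw θ ((j:ℤ) + 2 - k) ≤ (1 - θ)⁻¹ := by
  rw [← gw_sum]
  exact ENNReal.tsum_comp_le_tsum_of_injective (f := fun j : ℕ => (j:ℤ)+2-k)
    (fun a b h => by simpa using h) (gw θ)

lemma gw_col (θ : ℝ≥0∞) (j : ℕ) : ∑' k : ℕ, gw θ ((j:ℤ) + 2 - k) ≤ (1 - θ)⁻¹ := by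
  rw [← gw_sum]
  exact ENNReal.tsum_comp_le_tsum_of_injective (f := fun k : ℕ => (j:ℤ)+2-k)
    (fun a b h => by simpa using h) (gw θ)

/-! ### Lebesgue norms -/

/-- `L^a` norm -/
def N (a : ℝ) (h : SchwartzMap (Rn n) ℝ) : ℝ≥0∞ := eLpNorm' (⇑h) a volume

lemma N_eq (a : ℝ) (h : SchwartzMap (Rn n) ℝ) : N a h = (∫⁻ x, ‖h x‖ₑ ^ a) ^ (1/a) := rfl

lemma meas_enorm (h : SchwartzMap (Rn n) ℝ) : Measurable (fun x => ‖h x‖ₑ) :=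
  h.continuous.measurable.enorm

lemma N_one (h : SchwartzMap (Rn n) ℝ) : N 1 h = ∫⁻ x, ‖h x‖ₑ := by simp [N_eq]

lemma N_one_ne_top (h : SchwartzMap (Rn n) ℝ) : N 1 h ≠ ∞ := by
  rw [N_one]
  exact h.integrable.2.ne

lemma cv_enorm_le (K h : SchwartzMap (Rn n) ℝ) (x : Rn n) :
    ‖cv K h x‖ₑ ≤ ∫⁻ y, ‖K (x - y)‖ₑ * ‖h y‖ₑ := by
  rw [cv_apply, MeasureTheory.convolution_eq_swap]
  refine (enorm_integral_le_lintegral_enorm _).trans ?_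
  simp [enorm_mul]

lemma N_cv {a : ℝ} (ha : 1 ≤ a) (K h : SchwartzMap (Rn n) ℝ) :
    N a (cv K h) ≤ N 1 K * N a h := by
  have hm : Measurable (Function.uncurry fun x y : Rn n => ‖K (x - y)‖ₑ) :=
    (meas_enorm K).comp (measurable_fst.sub measurable_snd)
  have H := schur (volume : Measure (Rn n)) (volume : Measure (Rn n)) hm (meas_enorm h)
    (A := N 1 K) (fun x => ?_) (fun y => ?_) ha
  · refine le_trans ?_ H
    rw [N_eq]
    have : 0 ≤ a := by linarith
    gcongr with x
    exact cv_enorm_le K h x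
  · rw [N_one, lintegral_sub_left_eq_self (fun y => ‖K y‖ₑ) x]
  · rw [N_one, lintegral_sub_right_eq_self (fun x => ‖K x‖ₑ) y]

lemma N_ml {p r a : ℝ} (hp : 0 < p) (hpr : p < r) (h : 1/p = 1/r + 1/a)
    (f g : SchwartzMap (Rn n) ℝ) : N p (ml f g) ≤ N r f * N a g := by
  have := ENNReal.lintegral_Lp_mul_le_Lq_mul_Lr hp hpr h (volume : Measure (Rn n))
    (meas_enorm f).aemeasurable (meas_enorm g).aemeasurable
  simpa [N_eq, ml_apply, enorm_mul] using this

lemma N_add {a : ℝ} (ha : 1 ≤ a) (f g : SchwartzMap (Rn n) ℝ) : N a (f + g) ≤ N a f + N a g :=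
  eLpNorm'_add_le f.continuous.aestronglyMeasurable g.continuous.aestronglyMeasurable ha

lemma N_interp {a r : ℝ} (ha : 0 < a) (har : a ≤ r) {h : SchwartzMap (Rn n) ℝ} {M : ℝ≥0∞}
    (hM : ∀ x, ‖h x‖ₑ ≤ M) : N r h ≤ M ^ (1 - a/r) * N a h ^ (a/r) := by
  have hr : 0 < r := by linarith
  have : ∫⁻ x, ‖h x‖ₑ ^ r ≤ M ^ (r - a) * ∫⁻ x, ‖h x‖ₑ ^ a := by
    rw [← lintegral_const_mul _ ((meas_enorm h).pow_const a)]
    apply lintegral_mono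
    intro x
    have e : r = (r - a) + a := by ring
    simp only
    conv_lhs => rw [e]
    rw [ENNReal.rpow_add_of_nonneg _ _ (by linarith) ha.le]
    have : 0 ≤ r - a := by linarith
    gcongr
    exact hM x
  rw [N_eq, N_eq]
  calc _ ≤ (M ^ (r - a) * ∫⁻ x, ‖h x‖ₑ ^ a) ^ (1/r) := by gcongr
    _ = _ := by
      rw [ENNReal.mul_rpow_of_nonneg _ _ (by positivity), ← ENNReal.rpow_mul, ← ENNReal.rpow_mul]
      congr 2
      · field_simp
      · field_simp

lemma sup_bound (h : SchwartzMap (Rn n) ℝ) : ∃ M : ℝ, 0 ≤ M ∧ ∀ x, ‖h x‖ ≤ M :=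
  ⟨SchwartzMap.seminorm ℝ 0 0 h, apply_nonneg _ _, fun x => SchwartzMap.norm_le_seminorm ℝ h x⟩

lemma N_one_dil (K : SchwartzMap (Rn n) ℝ) (j : ℤ) : N 1 (dil K j) = N 1 K := by
  rw [N_one, N_one, ← ofReal_integral_norm_eq_lintegral_enorm (dil K j).integrable,
    ← ofReal_integral_norm_eq_lintegral_enorm K.integrable]
  congr 1
  simp_rw [dil_apply, lpKernel, norm_mul, Real.norm_of_nonneg (zpow_nonneg (zero_le_two (α := ℝ)) _)]
  rw [integral_const_mul]
  have := MeasureTheory.Measure.integral_comp_smul (volume : Measure (Rn n))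
    (fun v : Rn n => ‖K v‖) ((2:ℝ)^j)
  rw [this, smul_eq_mul, ← mul_assoc]
  have h2 : (2:ℝ) ^ (j * (n:ℤ)) * |(((2:ℝ)^j) ^ (Module.finrank ℝ (Rn n)))⁻¹| = 1 := by
    rw [finrank_euclideanSpace_fin, abs_of_pos (by positivity), zpow_mul, zpow_natCast]
    exact mul_inv_cancel₀ (by positivity)
  rw [h2, one_mul]

/-- `2^t` as an extended nonnegative real -/
def E2 (t : ℝ) : ℝ≥0∞ := ENNReal.ofReal ((2:ℝ) ^ t)

lemma E2_add (a b : ℝ) : E2 (a + b) = E2 a * E2 b := by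
  unfold E2
  rw [Real.rpow_add (by norm_num), ENNReal.ofReal_mul (by positivity)]

lemma E2_ne_top (a : ℝ) : E2 a ≠ ∞ := ENNReal.ofReal_ne_top

lemma E2_zero : E2 0 = 1 := by simp [E2]

lemma E2_rpow (a b : ℝ) : E2 a ^ b = E2 (a * b) := by
  unfold E2
  rw [ENNReal.ofReal_rpow_of_pos (by positivity), ← Real.rpow_mul (by norm_num)]

lemma E2_mono {a b : ℝ} (h : a ≤ b) : E2 a ≤ E2 b := by
  unfold E2
  apply ENNReal.ofReal_le_ofReal
  exact Real.rpow_le_rpow_of_exponent_le (by norm_num) h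

lemma holder_sup {a a' : ℝ} (h : a.HolderConjugate a') (K f : SchwartzMap (Rn n) ℝ) (x : Rn n) :
    ‖cv K f x‖ₑ ≤ N a' K * N a f := by
  refine (cv_enorm_le K f x).trans ?_
  have := ENNReal.lintegral_mul_le_Lp_mul_Lq (volume : Measure (Rn n)) h.symm
    (f := fun y => ‖K (x - y)‖ₑ) (g := fun y => ‖f y‖ₑ)
    ((meas_enorm K).comp (measurable_const.sub measurable_id)).aemeasurable
    (meas_enorm f).aemeasurable
  refine this.trans ?_
  rw [lintegral_sub_left_eq_self (fun y => ‖K y‖ₑ ^ a') x]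
  rfl

lemma bernstein_ineq (K : SchwartzMap (Rn n) ℝ) {a r : ℝ} (ha : 1 < a) (har : a ≤ r) :
    ∃ C : ℝ≥0∞, C ≠ ∞ ∧ ∀ (j : ℕ) (h : SchwartzMap (Rn n) ℝ), cv (dil K j) h = h →
      N r h ≤ C * E2 (j * (n * (1/a - 1/r))) * N a h := by
  have hr : 0 < r := by linarith
  have hc := Real.HolderConjugate.conjExponent ha
  set a' := a.conjExponent
  have ha' : 1 < a' := hc.symm.lt
  obtain ⟨M, hM0, hM⟩ := sup_bound K
  have e1 : 1 - 1/a' = 1/a := by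
    have := hc.inv_add_inv_eq_one
    simp only [one_div]; linarith
  have hK : ∀ j : ℕ, N a' (dil K j) ≤
      E2 (j * n * (1/a)) * (ENNReal.ofReal M ^ (1/a) * N 1 K ^ (1/a')) := by
    intro j
    have hs : ∀ x, ‖dil K j x‖ₑ ≤ E2 (j * n) * ENNReal.ofReal M := by
      intro x
      unfold E2
      rw [← ENNReal.ofReal_mul (by positivity), ← ofReal_norm]
      apply ENNReal.ofReal_le_ofReal
      rw [dil_apply, lpKernel, norm_mul, Real.norm_of_nonneg (by positivity)]
      have : (2:ℝ) ^ ((j:ℤ) * (n:ℤ)) = (2:ℝ) ^ ((j:ℝ) * n) := by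
        rw [← Real.rpow_intCast]; push_cast; rfl
      rw [this]
      gcongr
      exact hM _
    have := N_interp (a := 1) (r := a') one_pos ha'.le hs
    rw [e1, N_one_dil, ENNReal.mul_rpow_of_nonneg _ _ (by positivity), E2_rpow] at this
    rw [← mul_assoc]
    exact this
  set c := ENNReal.ofReal M ^ (1/a) * N 1 K ^ (1/a') with hcdef
  have hct : c ≠ ∞ := ENNReal.mul_ne_top
    (ENNReal.rpow_ne_top_of_nonneg (by positivity) ENNReal.ofReal_ne_top)
    (ENNReal.rpow_ne_top_of_nonneg (by positivity) (N_one_ne_top K))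
  have hθ : 0 ≤ 1 - a/r := by
    rw [sub_nonneg, div_le_one hr]; exact har
  refine ⟨c ^ (1 - a/r), ENNReal.rpow_ne_top_of_nonneg hθ hct, fun j h hh => ?_⟩
  have hb : ∀ x, ‖h x‖ₑ ≤ E2 (j * n * (1/a)) * c * N a h := by
    intro x
    have := holder_sup hc (dil K j) h x
    rw [hh] at this
    refine this.trans ?_
    gcongr
    exact hK j
  have := N_interp (by linarith) har hb
  refine this.trans (le_of_eq ?_)
  rw [ENNReal.mul_rpow_of_nonneg _ _ hθ, ENNReal.mul_rpow_of_nonneg _ _ hθ, E2_rpow, mul_assoc,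
    ← ENNReal.rpow_add_of_nonneg _ _ hθ (by positivity), sub_add_cancel, ENNReal.rpow_one]
  have e2 : (j:ℝ) * n * (1/a) * (1 - a/r) = j * (n * (1/a - 1/r)) := by
    have : a ≠ 0 := by linarith
    field_simp
  rw [e2, mul_comm (E2 _)]

/-! ### Decomposition of the product -/

lemma toC_add (f g : SchwartzMap (Rn n) ℝ) : toC (f + g) = toC f + toC g := by
  ext x; simp [toC_apply]

lemma ftC_add (f g : SchwartzMap (Rn n) ℝ) (ξ : Rn n) : ftC (f + g) ξ = ftC f ξ + ftC g ξ := by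
  rw [ftC_eq, toC_add, FourierTransform.fourier_add]
  rfl

lemma cv_add_left (f g h : SchwartzMap (Rn n) ℝ) : cv (f + g) h = cv f h + cv g h := by
  apply ftC_inj
  intro ξ
  simp only [ftC_cv, ftC_add]
  ring

lemma cv_add_right (f g h : SchwartzMap (Rn n) ℝ) : cv f (g + h) = cv f g + cv f h := by
  apply ftC_inj
  intro ξ
  simp only [ftC_cv, ftC_add]
  ring

lemma dil_zero (K : SchwartzMap (Rn n) ℝ) : dil K 0 = K := by
  ext x
  simp [dil_apply, lpKernel]

lemma N_zero {a : ℝ} (ha : 0 < a) : N a (0 : SchwartzMap (Rn n) ℝ) = 0 := by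
  rw [N_eq]
  simp [ha]

lemma cv_dil_apply (K f : SchwartzMap (Rn n) ℝ) (j : ℤ) (x : Rn n) :
    cv (dil K j) f x = ∫ u, K u * f (x - (2:ℝ)^(-j) • u) := by
  rw [cv_apply, MeasureTheory.convolution]
  have := MeasureTheory.Measure.integral_comp_smul (volume : Measure (Rn n))
    (fun u : Rn n => K u * f (x - (2:ℝ)^(-j) • u)) ((2:ℝ)^j)
  have h2 : (2:ℝ) ^ (j * (n:ℤ)) * |(((2:ℝ)^j) ^ (Module.finrank ℝ (Rn n)))⁻¹| = 1 := by
    rw [finrank_euclideanSpace_fin, abs_of_pos (by positivity), zpow_mul, zpow_natCast]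
    exact mul_inv_cancel₀ (by positivity)
  have h3 : (∫ u, K u * f (x - (2:ℝ)^(-j) • u)) = (2:ℝ) ^ (j * (n:ℤ)) *
      ∫ u, K ((2:ℝ)^j • u) * f (x - (2:ℝ)^(-j) • (2:ℝ)^j • u) := by
    rw [this, smul_eq_mul, ← mul_assoc, h2, one_mul]
  rw [h3, ← integral_const_mul]
  congr 1
  ext t
  have h4 : (2:ℝ)^(-j) • (2:ℝ)^j • t = t := by
    rw [smul_smul, ← zpow_add₀ (by norm_num)]
    simp
  rw [h4, dil_apply, lpKernel]
  simp [mul_assoc]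

lemma cv_dil_bound (K f : SchwartzMap (Rn n) ℝ) {M : ℝ} (hM : ∀ x, ‖f x‖ ≤ M) (j : ℤ) (x : Rn n) :
    ‖cv (dil K j) f x‖ ≤ (∫ u, ‖K u‖) * M := by
  rw [cv_dil_apply, ← integral_mul_const]
  apply norm_integral_le_of_norm_le (K.integrable.norm.mul_const M)
  refine Eventually.of_forall fun u => ?_
  rw [norm_mul]
  gcongr
  exact hM _

lemma cv_dil_tendsto {K : SchwartzMap (Rn n) ℝ} (hK : ∫ x, K x = 1) (f : SchwartzMap (Rn n) ℝ)
    (x : Rn n) : Tendsto (fun j : ℕ => cv (dil K (j:ℤ)) f x) atTop (nhds (f x)) := by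
  obtain ⟨M, hM0, hM⟩ := sup_bound f
  have e : f x = ∫ u, K u * f x := by rw [integral_mul_const, hK, one_mul]
  rw [e]
  simp_rw [cv_dil_apply]
  apply tendsto_integral_of_dominated_convergence (fun u => ‖K u‖ * M)
  · intro j
    have : Continuous fun u => K u * f (x - (2:ℝ)^(-(j:ℤ)) • u) :=
      K.continuous.mul (f.continuous.comp (by fun_prop))
    exact this.aestronglyMeasurable
  · exact K.integrable.norm.mul_const M
  · intro j
    refine Eventually.of_forall fun u => ?_
    rw [norm_mul]
    gcongr
    exact hM _
  · refine Eventually.of_forall fun u => ?_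
    apply Tendsto.const_mul
    have h1 : Tendsto (fun j : ℕ => (2:ℝ)^(-(j:ℤ))) atTop (nhds 0) := by
      have := tendsto_pow_atTop_nhds_zero_of_lt_one (r := (1/2:ℝ)) (by norm_num) (by norm_num)
      refine this.congr fun j => ?_
      simp
    have h2 : Tendsto (fun j : ℕ => x - (2:ℝ)^(-(j:ℤ)) • u) atTop (nhds x) := by
      have := (h1.smul_const u).const_sub x
      simpa using this
    exact (f.continuous.tendsto x).comp h2

lemma cv_tendsto (K : SchwartzMap (Rn n) ℝ) {h : SchwartzMap (Rn n) ℝ}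
    {P : ℕ → SchwartzMap (Rn n) ℝ} {M : ℝ} (hM : ∀ j x, ‖P j x‖ ≤ M)
    (hP : ∀ x, Tendsto (fun j => P j x) atTop (nhds (h x))) (x : Rn n) :
    Tendsto (fun j => cv K (P j) x) atTop (nhds (cv K h x)) := by
  simp_rw [cv_apply, MeasureTheory.convolution]
  apply tendsto_integral_of_dominated_convergence (fun u => ‖K u‖ * M)
  · intro j
    have : Continuous fun t => K t * P j (x - t) :=
      K.continuous.mul ((P j).continuous.comp (by fun_prop))
    exact this.aestronglyMeasurable
  · exact K.integrable.norm.mul_const M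
  · intro j
    refine Eventually.of_forall fun u => ?_
    simp only [ContinuousLinearMap.mul_apply', norm_mul]
    gcongr
    exact hM _ _
  · refine Eventually.of_forall fun u => ?_
    simp only [ContinuousLinearMap.mul_apply']
    exact (hP _).const_mul _

section Main
variable {ψ₀ Ψ : SchwartzMap (Rn n) ℝ}

/-- terms of the product decomposition -/
def Tm (ψ₀ Ψ f g : SchwartzMap (Rn n) ℝ) (j : ℕ) : SchwartzMap (Rn n) ℝ :=
  ml (cv (dil Ψ ((j+1 : ℕ):ℤ)) f) (cv (dil ψ₀ j) g) + ml (cv (dil Ψ j) g) (cv (dil ψ₀ j) f)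

/-- product of truncations -/
def Pm (Ψ f g : SchwartzMap (Rn n) ℝ) (j : ℕ) : SchwartzMap (Rn n) ℝ :=
  ml (cv (dil Ψ j) f) (cv (dil Ψ j) g)

lemma F_succ (hψ : IsLPF n ψ₀) (hΨ : IsLowPiece ψ₀ Ψ) (f : SchwartzMap (Rn n) ℝ) (j : ℕ) :
    cv (dil Ψ ((j+1 : ℕ):ℤ)) f = cv (dil Ψ j) f + cv (dil ψ₀ j) f := by
  rw [← cv_add_left, ← Psi_succ hψ hΨ]
  push_cast
  rfl

lemma Pm_succ (hψ : IsLPF n ψ₀) (hΨ : IsLowPiece ψ₀ Ψ) (f g : SchwartzMap (Rn n) ℝ) (j : ℕ) :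
    Pm Ψ f g (j+1) = Pm Ψ f g j + Tm ψ₀ Ψ f g j := by
  unfold Pm Tm
  rw [F_succ hψ hΨ f, F_succ hψ hΨ g]
  ext x
  simp only [SchwartzMap.add_apply, ml_apply]
  ring

lemma N_partial (hψ : IsLPF n ψ₀) (hΨ : IsLowPiece ψ₀ Ψ) {a : ℝ} (ha : 1 ≤ a)
    (K f g : SchwartzMap (Rn n) ℝ) (j : ℕ) :
    N a (cv K (Pm Ψ f g j)) ≤ N a (cv K (Pm Ψ f g 0)) +
      ∑ i ∈ Finset.range j, N a (cv K (Tm ψ₀ Ψ f g i)) := by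
  induction j with
  | zero => simp
  | succ j ih =>
    rw [Pm_succ hψ hΨ, cv_add_right, Finset.sum_range_succ, ← add_assoc]
    exact (N_add ha _ _).trans (by gcongr)

lemma N_prod (hψ : IsLPF n ψ₀) (hΨ : IsLowPiece ψ₀ Ψ) {a : ℝ} (ha : 1 ≤ a)
    (K f g : SchwartzMap (Rn n) ℝ) :
    N a (cv K (ml f g)) ≤ N a (cv K (Pm Ψ f g 0)) + ∑' i, N a (cv K (Tm ψ₀ Ψ f g i)) := by
  obtain ⟨M, hM0, hM⟩ := sup_bound f
  obtain ⟨M', hM0', hM'⟩ := sup_bound g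
  have hΨ1 := integral_Psi hψ hΨ
  have I0 : 0 ≤ ∫ u, ‖Ψ u‖ := integral_nonneg fun _ => norm_nonneg _
  have hb : ∀ (j : ℕ) x, ‖Pm Ψ f g j x‖ ≤ ((∫ u, ‖Ψ u‖) * M) * ((∫ u, ‖Ψ u‖) * M') := by
    intro j x
    rw [Pm, ml_apply, norm_mul]
    exact mul_le_mul (cv_dil_bound Ψ f hM j x) (cv_dil_bound Ψ g hM' j x) (norm_nonneg _)
      (by positivity)
  have ht : ∀ x, Tendsto (fun j => Pm Ψ f g j x) atTop (nhds (ml f g x)) := by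
    intro x
    simp only [Pm, ml_apply]
    exact (cv_dil_tendsto hΨ1 f x).mul (cv_dil_tendsto hΨ1 g x)
  have hlim := cv_tendsto K hb ht
  have := Lp.eLpNorm'_lim_le_liminf_eLpNorm' (μ := (volume : Measure (Rn n)))
    (p := a) (by linarith) (f := fun j => ⇑(cv K (Pm Ψ f g j)))
    (fun j => (cv K (Pm Ψ f g j)).continuous.aestronglyMeasurable)
    (f_lim := ⇑(cv K (ml f g))) (Eventually.of_forall hlim)
  refine this.trans ?_
  refine (liminf_le_liminf (v := fun _ => N a (cv K (Pm Ψ f g 0)) +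
      ∑' i, N a (cv K (Tm ψ₀ Ψ f g i))) (Eventually.of_forall fun j => ?_)).trans ?_
  · refine (N_partial hψ hΨ ha K f g j).trans ?_
    gcongr
    exact ENNReal.sum_le_tsum _
  · simp

/-- Besov norm on Schwartz functions -/
def X (ψ₀ Ψ : SchwartzMap (Rn n) ℝ) (s a : ℝ) (q : ℝ≥0∞) (f : SchwartzMap (Rn n) ℝ) : ℝ≥0∞ :=
  N a (cv Ψ f) + lq q (fun j => E2 (j * s) * N a (cv (dil ψ₀ j) f))

lemma besov_eq (s : ℝ) {p q : ℝ≥0∞} (hp0 : p ≠ 0) (hp : p ≠ ∞) (f : SchwartzMap (Rn n) ℝ) :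
    besovNorm ψ₀ Ψ s p q (fun x => f x) = X ψ₀ Ψ s p.toReal q f := by
  unfold besovNorm X lq N
  simp only [eLpNorm_eq_eLpNorm' hp0 hp, cv_coe, dil_coe]
  rfl

lemma E2_lt_one {t : ℝ} (ht : t < 0) : E2 t < 1 := by
  unfold E2
  rw [ENNReal.ofReal_lt_one]
  exact Real.rpow_lt_one_of_one_lt_of_neg (by norm_num) ht

lemma E2_pow (t : ℝ) (m : ℕ) : E2 t ^ m = E2 (m * t) := by
  rw [← ENNReal.rpow_natCast, E2_rpow, mul_comm]

lemma geom_ne_top {t : ℝ} (ht : t < 0) : (1 - E2 t)⁻¹ ≠ ∞ := by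
  rw [ENNReal.inv_ne_top]
  exact (tsub_pos_of_lt (E2_lt_one ht)).ne'

lemma N_cv_le_X {s a : ℝ} {q : ℝ≥0∞} (hq : 1 ≤ q) (f : SchwartzMap (Rn n) ℝ) (j : ℕ) :
    N a (cv (dil ψ₀ j) f) ≤ E2 (-(j * s)) * X ψ₀ Ψ s a q f := by
  have h := le_lq hq (fun j : ℕ => E2 (j * s) * N a (cv (dil ψ₀ j) f)) j
  calc N a (cv (dil ψ₀ j) f) = E2 (-(j * s)) * (E2 (j * s) * N a (cv (dil ψ₀ j) f)) := by
        rw [← mul_assoc, ← E2_add, neg_add_cancel, E2_zero, one_mul]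
    _ ≤ _ := by
        gcongr
        exact h.trans le_add_self

lemma F_bound (hψ : IsLPF n ψ₀) (hΨ : IsLowPiece ψ₀ Ψ) {s a r : ℝ} {q : ℝ≥0∞} (hq : 1 ≤ q)
    (ha : 1 < a) (har : a ≤ r) (hs : n * (1/a - 1/r) < s) :
    ∃ C : ℝ≥0∞, C ≠ ∞ ∧ ∀ (f : SchwartzMap (Rn n) ℝ) (j : ℕ),
      N r (cv (dil Ψ j) f) ≤ C * X ψ₀ Ψ s a q f := by
  obtain ⟨C, hC, hB⟩ := bernstein_ineq Ψ ha har
  set δ := n * (1/a - 1/r) with hδ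
  have h2 : ∀ (h : SchwartzMap (Rn n) ℝ) (i : ℕ), FS h ((2:ℝ)^((i:ℤ)+1)) →
      N r h ≤ C * E2 ((i + 2 : ℕ) * δ) * N a h := by
    intro h i hh
    apply hB
    have := repro hψ hΨ i hh
    push_cast
    exact this
  have hF0 : ∀ f : SchwartzMap (Rn n) ℝ, N r (cv Ψ f) ≤ C * E2 (2 * δ) * X ψ₀ Ψ s a q f := by
    intro f
    have := h2 (cv Ψ f) 0 (((FS_Psi hψ hΨ).cv f).mono (by norm_num))
    norm_num at this
    refine this.trans ?_
    gcongr
    exact le_self_add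
  have hD : ∀ (f : SchwartzMap (Rn n) ℝ) (i : ℕ), N r (cv (dil ψ₀ i) f) ≤
      C * E2 (2 * δ) * E2 (δ - s) ^ i * X ψ₀ Ψ s a q f := by
    intro f i
    have h1 := h2 (cv (dil ψ₀ i) f) i ((((FS_psi hψ).dil i).cv f).mono (by
      rw [zpow_add₀ (by norm_num), zpow_one]))
    refine h1.trans ?_
    have h3 := N_cv_le_X (ψ₀ := ψ₀) (Ψ := Ψ) (s := s) (a := a) hq f i
    calc _ ≤ C * E2 ((i + 2 : ℕ) * δ) * (E2 (-(i * s)) * X ψ₀ Ψ s a q f) := by gcongr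
      _ = _ := by
        rw [E2_pow]
        have : ((i + 2 : ℕ) : ℝ) * δ = 2 * δ + i * δ := by push_cast; ring
        rw [this, E2_add, show (i:ℝ) * (δ - s) = i * δ + -(i * s) by ring, E2_add]
        ring
  refine ⟨C * E2 (2 * δ) * (1 + (1 - E2 (δ - s))⁻¹), ?_, ?_⟩
  · apply ENNReal.mul_ne_top (ENNReal.mul_ne_top hC (E2_ne_top _))
    exact ENNReal.add_ne_top.2 ⟨ENNReal.one_ne_top, geom_ne_top (by linarith)⟩
  · intro f j
    have hsum : N r (cv (dil Ψ j) f) ≤ N r (cv Ψ f) +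
        ∑ i ∈ Finset.range j, N r (cv (dil ψ₀ i) f) := by
      induction j with
      | zero => simp [dil_zero]
      | succ j ih =>
        rw [F_succ hψ hΨ, Finset.sum_range_succ, ← add_assoc]
        exact (N_add (by linarith) _ _).trans (by gcongr)
    calc _ ≤ _ := hsum
      _ ≤ C * E2 (2 * δ) * X ψ₀ Ψ s a q f +
          ∑ i ∈ Finset.range j, C * E2 (2 * δ) * E2 (δ - s) ^ i * X ψ₀ Ψ s a q f := by
        gcongr with i hi
        · exact hF0 f
        · exact hD f i
      _ ≤ C * E2 (2 * δ) * X ψ₀ Ψ s a q f +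
          ∑' i : ℕ, C * E2 (2 * δ) * E2 (δ - s) ^ i * X ψ₀ Ψ s a q f := by
        gcongr
        exact ENNReal.sum_le_tsum _
      _ = _ := by
        rw [ENNReal.tsum_mul_right, ENNReal.tsum_mul_left, ENNReal.tsum_geometric]
        ring

lemma high_bound (hψ : IsLPF n ψ₀) {s p : ℝ} (hp : 1 ≤ p) {h : SchwartzMap (Rn n) ℝ} (j k : ℕ)
    (hh : FS h ((2:ℝ)^(j + 2))) :
    E2 (k * s) * N p (cv (dil ψ₀ k) h) ≤
      N 1 ψ₀ * E2 (2 * s) * (gw (E2 (-s)) ((j:ℤ) + 2 - k) * (E2 (j * s) * N p h)) := by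
  rcases le_or_gt k (j + 2) with hk | hk
  · have h1 := N_cv hp (dil ψ₀ k) h
    rw [N_one_dil] at h1
    have h2 : gw (E2 (-s)) ((j:ℤ) + 2 - k) = E2 ((j + 2 - k) * (-s)) := by
      unfold gw
      rw [if_pos (by omega), E2_pow]
      congr 2
      have : ((((j:ℤ) + 2 - k).toNat : ℤ) : ℝ) = (j:ℝ) + 2 - k := by
        rw [Int.toNat_of_nonneg (by omega)]
        push_cast; ring
      exact_mod_cast this
    have h3 : E2 (k * s) = E2 (2 * s) * (E2 ((j + 2 - k) * (-s)) * E2 (j * s)) := by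
      rw [← E2_add, ← E2_add]
      congr 1; ring
    rw [h2]
    calc _ ≤ E2 (k * s) * (N 1 ψ₀ * N p h) := by gcongr
      _ = _ := by rw [h3]; ring
  · have : cv (dil ψ₀ k) h = 0 := by
      apply proj_zero hψ
      apply hh.mono
      rw [← zpow_natCast]
      apply zpow_le_zpow_right₀ (by norm_num)
      push_cast; omega
    rw [this, N_zero (by linarith)]
    simp

lemma FS.add {f g : SchwartzMap (Rn n) ℝ} {a : ℝ} (hf : FS f a) (hg : FS g a) :
    FS (f + g) a := by
  intro ξ hξ
  rw [ftC_add, hf ξ hξ, hg ξ hξ, add_zero]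

lemma FS_Tm (hψ : IsLPF n ψ₀) (hΨ : IsLowPiece ψ₀ Ψ) (f g : SchwartzMap (Rn n) ℝ) (j : ℕ) :
    FS (Tm ψ₀ Ψ f g j) ((2:ℝ)^(j + 2)) := by
  have hF : ∀ (i : ℕ) (f : SchwartzMap (Rn n) ℝ), FS (cv (dil Ψ i) f) ((2:ℝ)^i) := by
    intro i f
    exact (((FS_Psi hψ hΨ).dil i).cv f).mono (by simp)
  have hD : ∀ (i : ℕ) (f : SchwartzMap (Rn n) ℝ), FS (cv (dil ψ₀ i) f) ((2:ℝ)^(i+1)) := by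
    intro i f
    exact (((FS_psi hψ).dil i).cv f).mono (by simp [pow_succ])
  have h0 : (0:ℝ) < 2 ^ j := by positivity
  apply FS.add
  · exact ((hF (j+1) f).ml (hD j g)).mono (by simp only [pow_succ]; linarith)
  · exact ((hF j g).ml (hD j f)).mono (by simp only [pow_succ]; linarith)

lemma FS_Pm (hψ : IsLPF n ψ₀) (hΨ : IsLowPiece ψ₀ Ψ) (f g : SchwartzMap (Rn n) ℝ) :
    FS (Pm Ψ f g 0) ((2:ℝ)^(0 + 2)) := by
  have hF : ∀ (f : SchwartzMap (Rn n) ℝ), FS (cv (dil Ψ ((0:ℕ):ℤ)) f) 1 := by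
    intro f
    exact (((FS_Psi hψ hΨ).dil _).cv f).mono (by simp)
  exact ((hF f).ml (hF g)).mono (by norm_num)

lemma main_real (hψ : IsLPF n ψ₀) (hΨ : IsLowPiece ψ₀ Ψ) {s : ℝ} (hs : 0 < s) {q : ℝ≥0∞}
    (hq : 1 ≤ q) {p a r : ℝ} (hp : 1 ≤ p) (hpa : p < a) (har : a ≤ r) (hpr : 1/p = 1/r + 1/a)
    (hsn : n * (1/a - 1/r) < s) :
    ∃ C : ℝ≥0∞, C ≠ ∞ ∧ ∀ f g : SchwartzMap (Rn n) ℝ,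
      X ψ₀ Ψ s p q (ml f g) ≤ C * (X ψ₀ Ψ s a q f * X ψ₀ Ψ s a q g) := by
  obtain ⟨D, hD, hF⟩ := F_bound (n := n) hψ hΨ hq (by linarith : 1 < a) har hsn
  set θ := E2 (-s) with hθ
  set G := (1 - θ)⁻¹ with hG
  have hGt : G ≠ ∞ := geom_ne_top (by linarith)
  refine ⟨(N 1 Ψ * (1 + G) + N 1 ψ₀ * E2 (2 * s) * G) * (3 * D), ?_, ?_⟩
  · have := N_one_ne_top Ψ
    have := N_one_ne_top ψ₀
    have := E2_ne_top (2*s)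
    finiteness
  intro f g
  set Xf := X ψ₀ Ψ s a q f with hXf
  set Xg := X ψ₀ Ψ s a q g with hXg
  set P0 := Pm Ψ f g 0 with hP0
  set T := Tm ψ₀ Ψ f g with hT
  set b : ℕ → ℝ≥0∞ := fun j => (if j = 0 then N p P0 else 0) + E2 (j * s) * N p (T j) with hb
  have hpr' : p < r := by linarith
  have hml : ∀ u v : SchwartzMap (Rn n) ℝ, N p (ml u v) ≤ N r u * N a v :=
    fun u v => N_ml (by linarith) hpr' hpr u v
  have hbP : N p P0 ≤ D * (Xf * Xg) := by
    refine (hml _ _).trans ?_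
    rw [← mul_assoc]
    gcongr
    · exact hF f 0
    · rw [Nat.cast_zero, dil_zero]
      exact le_self_add
  have hbT : ∀ j : ℕ, E2 (j * s) * N p (T j) ≤
      D * Xf * (E2 (j * s) * N a (cv (dil ψ₀ j) g)) +
      D * Xg * (E2 (j * s) * N a (cv (dil ψ₀ j) f)) := by
    intro j
    have h1 : N p (T j) ≤ (D * Xf) * N a (cv (dil ψ₀ j) g) + (D * Xg) * N a (cv (dil ψ₀ j) f) := by
      refine (N_add hp _ _).trans ?_
      gcongr
      · exact (hml _ _).trans (by gcongr; exact hF f (j+1))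
      · exact (hml _ _).trans (by gcongr; exact hF g j)
    calc _ ≤ E2 (j * s) * ((D * Xf) * N a (cv (dil ψ₀ j) g) +
          (D * Xg) * N a (cv (dil ψ₀ j) f)) := by gcongr
      _ = _ := by ring
  have hlqb : lq q b ≤ 3 * D * (Xf * Xg) := by
    have h1 : lq q b ≤ N p P0 + lq q (fun j => E2 (j * s) * N p (T j)) := by
      refine (lq_add hq _ _).trans ?_
      rw [lq_single hq]
    have h2 : lq q (fun j => E2 (j * s) * N p (T j)) ≤ D * Xf * Xg + D * Xg * Xf := by
      refine (lq_mono hbT).trans ((lq_add hq _ _).trans ?_)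
      rw [lq_const_mul hq, lq_const_mul hq]
      gcongr
      · exact le_add_self
      · exact le_add_self
    calc _ ≤ _ := h1
      _ ≤ D * (Xf * Xg) + (D * Xf * Xg + D * Xg * Xf) := by gcongr
      _ = _ := by ring
  have hlow : N p (cv Ψ (ml f g)) ≤ N 1 Ψ * (1 + G) * lq q b := by
    refine (N_prod hψ hΨ hp Ψ f g).trans ?_
    have h1 : N p (cv Ψ P0) ≤ N 1 Ψ * lq q b := by
      refine (N_cv hp _ _).trans ?_
      gcongr
      refine le_trans ?_ (le_lq hq b 0)
      simp only [hb, if_true]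
      exact le_self_add
    have h2 : ∀ j : ℕ, N p (cv Ψ (T j)) ≤ N 1 Ψ * (θ ^ j * lq q b) := by
      intro j
      refine (N_cv hp _ _).trans ?_
      gcongr
      have h3 : E2 (j * s) * N p (T j) ≤ lq q b := le_trans le_add_self (le_lq hq b j)
      calc N p (T j) = θ ^ j * (E2 (j * s) * N p (T j)) := by
            rw [hθ, E2_pow, ← mul_assoc, ← E2_add]
            rw [show (j:ℝ) * -s + j * s = 0 by ring, E2_zero, one_mul]
        _ ≤ _ := by gcongr
    calc _ ≤ N 1 Ψ * lq q b + ∑' j : ℕ, N 1 Ψ * (θ ^ j * lq q b) :=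
          add_le_add h1 (ENNReal.tsum_le_tsum h2)
      _ = _ := by
        rw [ENNReal.tsum_mul_left, ENNReal.tsum_mul_right, ENNReal.tsum_geometric]
        ring
  have hhigh : lq q (fun k => E2 (k * s) * N p (cv (dil ψ₀ k) (ml f g))) ≤
      N 1 ψ₀ * E2 (2 * s) * G * lq q b := by
    have h1 : ∀ k : ℕ, E2 (k * s) * N p (cv (dil ψ₀ k) (ml f g)) ≤
        N 1 ψ₀ * E2 (2 * s) * ∑' j : ℕ, gw θ ((j:ℤ) + 2 - k) * b j := by
      intro k
      have hA := high_bound (s := s) hψ hp 0 k (FS_Pm hψ hΨ f g)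
      have hB : ∀ j, _ := fun j => high_bound (s := s) hψ hp j k (FS_Tm hψ hΨ f g j)
      calc _ ≤ E2 (k * s) * (N p (cv (dil ψ₀ k) P0) + ∑' j, N p (cv (dil ψ₀ k) (T j))) := by
            gcongr
            exact N_prod hψ hΨ hp _ f g
        _ = E2 (k * s) * N p (cv (dil ψ₀ k) P0) + ∑' j, E2 (k * s) * N p (cv (dil ψ₀ k) (T j)) := by
            rw [mul_add, ENNReal.tsum_mul_left]
        _ ≤ N 1 ψ₀ * E2 (2 * s) * (gw θ (((0:ℕ):ℤ) + 2 - k) * N p P0) +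
            ∑' j : ℕ, N 1 ψ₀ * E2 (2 * s) * (gw θ ((j:ℤ) + 2 - k) * (E2 (j * s) * N p (T j))) := by
            refine add_le_add ?_ (ENNReal.tsum_le_tsum hB)
            simpa [E2_zero] using hA
        _ = N 1 ψ₀ * E2 (2 * s) * (gw θ (((0:ℕ):ℤ) + 2 - k) * N p P0 +
            ∑' j : ℕ, (gw θ ((j:ℤ) + 2 - k) * (E2 (j * s) * N p (T j)))) := by
            rw [ENNReal.tsum_mul_left, mul_add]
        _ = _ := by
            congr 1
            simp only [hb, mul_add]
            rw [ENNReal.tsum_add]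
            congr 1
            rw [tsum_eq_single 0]
            · simp
            · intro j hj
              simp [hj]
    refine (lq_mono h1).trans ?_
    rw [lq_const_mul hq, mul_assoc _ G]
    gcongr
    exact lq_schur hq (fun k j => gw θ ((j:ℤ) + 2 - k)) b (gw_row θ) (gw_col θ)
  calc X ψ₀ Ψ s p q (ml f g) ≤ N 1 Ψ * (1 + G) * lq q b + N 1 ψ₀ * E2 (2 * s) * G * lq q b :=
        add_le_add hlow hhigh
    _ = (N 1 Ψ * (1 + G) + N 1 ψ₀ * E2 (2 * s) * G) * lq q b := by ring
    _ ≤ (N 1 Ψ * (1 + G) + N 1 ψ₀ * E2 (2 * s) * G) * (3 * D * (Xf * Xg)) := by gcongr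
    _ = _ := by ring

end Main

/-- Besov product estimate: if `s > 0`, `q ∈ [1,∞]`, `p, p₁ ∈ [1,∞)` with
`p < p₁ ≤ 2p` and `s > n(2/p₁ − 1/p)`, then
`‖fg‖_{B^s_{p,q}} ≤ C ‖f‖_{B^s_{p₁,q}} ‖g‖_{B^s_{p₁,q}}` for all Schwartz `f, g`. -/
theorem besov_product_estimate
    (n : ℕ) (hn : 1 ≤ n) (ψ₀ Ψ : SchwartzMap (Rn n) ℝ)
    (hψ : IsLPF n ψ₀) (hΨ : IsLowPiece ψ₀ Ψ)
    (s : ℝ) (hs : 0 < s) (q : ℝ≥0∞) (hq : 1 ≤ q)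
    (p p₁ : ℝ≥0∞) (hp1 : 1 ≤ p) (hpp₁ : p < p₁) (hp₁2p : p₁ ≤ 2 * p) (hp₁fin : p₁ < ∞)
    (hsn : (n:ℝ) * (2 / p₁.toReal - 1 / p.toReal) < s) :
    ∃ C : ℝ, 0 < C ∧ ∀ f g : SchwartzMap (Rn n) ℝ,
      besovNorm ψ₀ Ψ s p q (fun x => f x * g x)
        ≤ ENNReal.ofReal C *
          (besovNorm ψ₀ Ψ s p₁ q (fun x => f x) * besovNorm ψ₀ Ψ s p₁ q (fun x => g x)) := by
  have hp_ne : p ≠ ∞ := (hpp₁.trans hp₁fin).ne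
  have hp0 : p ≠ 0 := (zero_lt_one.trans_le hp1).ne'
  have hp₁0 : p₁ ≠ 0 := (zero_lt_one.trans_le (hp1.trans hpp₁.le)).ne'
  have h1 : 1 ≤ p.toReal := one_le_toReal hp1 hp_ne
  have h2 : p.toReal < p₁.toReal := (ENNReal.toReal_lt_toReal hp_ne hp₁fin.ne).2 hpp₁
  have h3 : p₁.toReal ≤ 2 * p.toReal := by
    have := ENNReal.toReal_mono (ENNReal.mul_ne_top ENNReal.ofNat_ne_top hp_ne) hp₁2p
    simpa using this
  set P := p.toReal with hP
  set A := p₁.toReal with hA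
  have hP0 : 0 < P := by linarith
  have hA0 : 0 < A := by linarith
  set ρ := 1/P - 1/A with hρ
  have hρ0 : 0 < ρ := sub_pos.2 (one_div_lt_one_div_of_lt hP0 h2)
  have hρA : ρ ≤ 1/A := by
    have : 1/P ≤ 2/A := by
      rw [div_le_div_iff₀ hP0 hA0]; linarith
    have h4 : (2:ℝ)/A = 1/A + 1/A := by ring
    linarith
  obtain ⟨C, hC, hX⟩ := main_real (n := n) (r := 1/ρ) hψ hΨ hs hq h1 h2
    ((le_div_iff₀ hρ0).2 (by rw [le_div_iff₀ hA0] at hρA; linarith))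
    (by rw [one_div_one_div]; ring)
    (by
      rw [one_div_one_div]
      refine lt_of_eq_of_lt ?_ hsn
      rw [hρ]; ring)
  refine ⟨C.toReal + 1, by positivity, fun f g => ?_⟩
  have e1 : besovNorm ψ₀ Ψ s p q (fun x => f x * g x) = X ψ₀ Ψ s P q (ml f g) :=
    besov_eq s hp0 hp_ne (ml f g)
  rw [e1, besov_eq s hp₁0 hp₁fin.ne, besov_eq s hp₁0 hp₁fin.ne]
  refine (hX f g).trans ?_
  gcongr
  calc C = ENNReal.ofReal C.toReal := (ENNReal.ofReal_toReal hC).symm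
    _ ≤ _ := ENNReal.ofReal_le_ofReal (by linarith)
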